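/- arXiv:1003.2584 — 8 statements merged into one kernel-verified Lean document; each statement's English description precedes it below -/
import Mathlib

section
/- A countable discrete group G is amenable if and only if there exists a nonzero continuous linear functional φ on ℓ∞(G) that is invariant under the left-translation action of G (i.e. φ(g·f) = φ(f) for all g ∈ G and f ∈ ℓ∞(G)). (This expresses the non-vanishing of H⁰_b(G, ℓ∞(G)*) as a characterisation of amenability.) -/
noncomputable section
open scoped ENNReal

/-- `ℓ∞(G)`: the Banach space of bounded real-valued functions on `G` with the sup norm. -/
abbrev Linf (G : Type*) : Type _ := ↥(lp (fun _ : G => ℝ) ∞)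

/-- The left-translation action of `G` on `ℓ∞(G)`: `(g · f)(h) = f (g⁻¹ h)`. -/
def ltrans {G : Type*} [Group G] (g : G) (f : Linf G) : Linf G :=
  ⟨fun h => f (g⁻¹ * h),
    memℓp_infty ⟨‖f‖, by
      rintro x ⟨h, rfl⟩
      exact lp.norm_apply_le_norm ENNReal.top_ne_zero f (g⁻¹ * h)⟩⟩

/-- The constant function `1` as an element of `ℓ∞(G)`. -/
def lone (G : Type*) : Linf G :=
  ⟨fun _ => 1, memℓp_infty ⟨1, by rintro x ⟨h, rfl⟩; simp⟩⟩

/-!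
The space `ℓ∞(G)` is a normed lattice, so a bounded functional `φ` has a modulus `|φ|`, given on
`f ≥ 0` by the Riesz–Kantorovich formula `|φ| f = sup {φ u | -f ≤ u ≤ f}`. It is positive and has
the same norm as `φ`. The formula involves only `φ` and the order, so any order automorphism that
fixes `φ` fixes `|φ|`. Left translations are order automorphisms, hence if `φ ≠ 0` is invariant,
then `|φ| / ‖φ‖` is an invariant mean.
-/

section RieszDecomposition

open scoped Pointwise

variable {E : Type*} [AddCommGroup E] [Lattice E] [IsOrderedAddMonoid E]

-- `Set.Icc_add_Icc` is the case of a linear order.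
theorem Icc_add_Icc_of_le {a b c d : E} (hab : a ≤ b) (hcd : c ≤ d) :
    Set.Icc a b + Set.Icc c d = Set.Icc (a + c) (b + d) := by
  refine (Set.Icc_add_Icc_subset a b c d).antisymm fun w ⟨hw, hw'⟩ ↦ ?_
  refine ⟨(w - c) ⊓ b, ⟨le_inf (le_sub_iff_add_le.2 hw) hab, inf_le_right⟩,
    w - (w - c) ⊓ b, ⟨le_sub_comm.1 inf_le_left, sub_le_comm.1 (le_inf ?_ ?_)⟩, add_sub_cancel _ _⟩
  · exact sub_le_sub_left hcd w
  · exact sub_le_iff_le_add.2 hw'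

end RieszDecomposition

section ExtendNonneg

theorem sub_eq_sub_of_add_on_nonneg {E A : Type*} [AddCommGroup E] [LE E] [AddCommGroup A]
    {S : E → A} (hS : ∀ f g, 0 ≤ f → 0 ≤ g → S (f + g) = S f + S g)
    {a b c d : E} (ha : 0 ≤ a) (hb : 0 ≤ b) (hc : 0 ≤ c) (hd : 0 ≤ d) (h : a - b = c - d) :
    S a - S b = S c - S d := by
  rw [sub_eq_sub_iff_add_eq_add] at h ⊢
  rw [← hS a d ha hd, ← hS c b hc hb, h]

variable {E A : Type*} [AddCommGroup E] [Lattice E] [IsOrderedAddMonoid E] [AddCommGroup A]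
  {S : E → A}

variable (S) in
/-- The additive extension to `E` of a map `S` that is additive on the positive cone; the values of
`S` off the cone are ignored. -/
def extendNonneg (hS : ∀ f g, 0 ≤ f → 0 ≤ g → S (f + g) = S f + S g) : E →+ A :=
  AddMonoidHom.mk' (fun f ↦ S f⁺ - S f⁻) fun f g ↦ by
    rw [sub_add_sub_comm, ← hS _ _ (posPart_nonneg f) (posPart_nonneg g),
      ← hS _ _ (negPart_nonneg f) (negPart_nonneg g)]
    refine sub_eq_sub_of_add_on_nonneg hS (posPart_nonneg _) (negPart_nonneg _)
      (add_nonneg (posPart_nonneg f) (posPart_nonneg g))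
      (add_nonneg (negPart_nonneg f) (negPart_nonneg g)) ?_
    rw [← sub_add_sub_comm, posPart_sub_negPart, posPart_sub_negPart, posPart_sub_negPart]

theorem extendNonneg_of_nonneg (hS : ∀ f g, 0 ≤ f → 0 ≤ g → S (f + g) = S f + S g) {f : E}
    (hf : 0 ≤ f) : extendNonneg S hS f = S f := by
  have h0 : S 0 = 0 := by simpa using hS 0 0 le_rfl le_rfl
  change S f⁺ - S f⁻ = S f
  rw [posPart_of_nonneg hf, negPart_of_nonneg hf, h0, sub_zero]

end ExtendNonneg

section Modulus

variable {E : Type*} [NormedAddCommGroup E] [Lattice E] [HasSolidNorm E] [IsOrderedAddMonoid E]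

theorem norm_le_of_mem_Icc_neg {f u : E} (hu : u ∈ Set.Icc (-f) f) : ‖u‖ ≤ ‖f‖ :=
  norm_le_norm_of_abs_le_abs <| (abs_le'.2 ⟨hu.2, neg_le.1 hu.1⟩).trans (le_abs_self f)

variable [NormedSpace ℝ E] (φ : E →L[ℝ] ℝ)

theorem norm_mul_norm_mem_upperBounds_image_Icc_neg (f : E) :
    ‖φ‖ * ‖f‖ ∈ upperBounds (φ '' Set.Icc (-f) f) := by
  rintro _ ⟨u, hu, rfl⟩
  exact (le_abs_self _).trans (φ.le_opNorm_of_le (norm_le_of_mem_Icc_neg hu))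

theorem bddAbove_image_Icc_neg (f : E) : BddAbove (φ '' Set.Icc (-f) f) :=
  ⟨_, norm_mul_norm_mem_upperBounds_image_Icc_neg φ f⟩

theorem sSup_image_Icc_neg_add {f g : E} (hf : 0 ≤ f) (hg : 0 ≤ g) :
    sSup (φ '' Set.Icc (-(f + g)) (f + g)) =
      sSup (φ '' Set.Icc (-f) f) + sSup (φ '' Set.Icc (-g) g) := by
  have hf' : -f ≤ f := neg_le_self hf
  have hg' : -g ≤ g := neg_le_self hg
  rw [neg_add, ← Icc_add_Icc_of_le hf' hg', Set.image_add,
    csSup_add ((Set.nonempty_Icc.2 hf').image φ) (bddAbove_image_Icc_neg φ f)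
      ((Set.nonempty_Icc.2 hg').image φ) (bddAbove_image_Icc_neg φ g)]

/-- The Riesz–Kantorovich formula for the modulus `|φ|`, extended additively from the positive
cone. -/
def modulusAddHom : E →+ ℝ :=
  extendNonneg (fun f ↦ sSup (φ '' Set.Icc (-f) f)) fun _ _ ↦ sSup_image_Icc_neg_add φ

variable {φ}

theorem modulusAddHom_of_nonneg {f : E} (hf : 0 ≤ f) :
    modulusAddHom φ f = sSup (φ '' Set.Icc (-f) f) :=
  extendNonneg_of_nonneg _ hf

variable (φ)

theorem abs_apply_le_modulusAddHom_abs (f : E) : |φ f| ≤ modulusAddHom φ |f| := by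
  rw [modulusAddHom_of_nonneg (abs_nonneg f)]
  have hneg : -|f| ≤ f := neg_le.1 (neg_le_abs f)
  refine abs_le'.2 ⟨le_csSup (bddAbove_image_Icc_neg φ |f|) ⟨f, ⟨hneg, le_abs_self f⟩, rfl⟩,
    le_csSup (bddAbove_image_Icc_neg φ |f|) ⟨-f, ⟨?_, neg_le_abs f⟩, map_neg φ f⟩⟩
  exact neg_le_neg (le_abs_self f)

theorem modulusAddHom_nonneg {f : E} (hf : 0 ≤ f) : 0 ≤ modulusAddHom φ f := by
  simpa only [abs_of_nonneg hf] using (abs_nonneg _).trans (abs_apply_le_modulusAddHom_abs φ f)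

theorem modulusAddHom_le {f : E} (hf : 0 ≤ f) : modulusAddHom φ f ≤ ‖φ‖ * ‖f‖ := by
  rw [modulusAddHom_of_nonneg hf]
  exact csSup_le ((Set.nonempty_Icc.2 (neg_le_self hf)).image φ)
    (norm_mul_norm_mem_upperBounds_image_Icc_neg φ f)

theorem norm_modulusAddHom_le (f : E) : ‖modulusAddHom φ f‖ ≤ ‖φ‖ * ‖f‖ := by
  have h : |modulusAddHom φ f| ≤ modulusAddHom φ |f| := by
    have h₁ := modulusAddHom_nonneg φ (sub_nonneg.2 (le_abs_self f))
    have h₂ := modulusAddHom_nonneg φ (sub_nonneg.2 (neg_le_abs f))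
    rw [map_sub, sub_nonneg] at h₁ h₂
    exact abs_le'.2 ⟨h₁, map_neg (modulusAddHom φ) f ▸ h₂⟩
  calc ‖modulusAddHom φ f‖ ≤ modulusAddHom φ |f| := h
    _ ≤ ‖φ‖ * ‖|f|‖ := modulusAddHom_le φ (abs_nonneg f)
    _ = ‖φ‖ * ‖f‖ := by rw [norm_abs_eq_norm]

/-- The modulus `|φ|` of a bounded functional on a normed lattice. -/
def modulus : E →L[ℝ] ℝ :=
  (modulusAddHom φ).toRealLinearMap <|
    AddMonoidHomClass.continuous_of_bound _ ‖φ‖ (norm_modulusAddHom_le φ)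

theorem modulus_nonneg {f : E} (hf : 0 ≤ f) : 0 ≤ modulus φ f :=
  modulusAddHom_nonneg φ hf

theorem norm_modulus : ‖modulus φ‖ = ‖φ‖ := by
  refine le_antisymm
    ((modulus φ).opNorm_le_bound (norm_nonneg φ) (norm_modulusAddHom_le φ))
    (φ.opNorm_le_bound (norm_nonneg _) fun f ↦ ?_)
  calc ‖φ f‖ ≤ modulus φ |f| := abs_apply_le_modulusAddHom_abs φ f
    _ ≤ ‖modulus φ |f|‖ := le_abs_self _
    _ ≤ ‖modulus φ‖ * ‖|f|‖ := (modulus φ).le_opNorm _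
    _ = ‖modulus φ‖ * ‖f‖ := by rw [norm_abs_eq_norm]

variable {φ}

theorem modulus_map_of_forall_map_eq (T : E ≃+o E) (hT : ∀ f, φ (T f) = φ f) (f : E) :
    modulus φ (T f) = modulus φ f := by
  have image_Icc {a : E} : φ '' Set.Icc (-T a) (T a) = φ '' Set.Icc (-a) a := by
    have hIcc : Set.Icc (-T a) (T a) = T '' Set.Icc (-a) a := by
      rw [← map_neg]
      exact ((T : E ≃o E).image_Icc (-a) a).symm
    rw [hIcc, Set.image_image]
    simp only [hT]
  have of_nonneg {a : E} (ha : 0 ≤ a) : modulus φ (T a) = modulus φ a := by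
    have hTa : 0 ≤ T a := map_zero T ▸ OrderHomClass.mono T ha
    exact (modulusAddHom_of_nonneg hTa).trans <|
      (congrArg sSup image_Icc).trans (modulusAddHom_of_nonneg ha).symm
  rw [← posPart_sub_negPart f, map_sub T, map_sub, map_sub, of_nonneg (posPart_nonneg f),
    of_nonneg (negPart_nonneg f)]

end Modulus

namespace Linf

variable {α : Type*}

instance : PartialOrder (Linf α) :=
  PartialOrder.lift (fun f ↦ (f : α → ℝ)) fun _ _ ↦ lp.ext

theorem abs_apply_le_norm (f : Linf α) (a : α) : |f a| ≤ ‖f‖ :=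
  lp.norm_apply_le_norm ENNReal.top_ne_zero f a

instance : Max (Linf α) where
  max f g := ⟨fun a ↦ f a ⊔ g a, memℓp_infty ⟨‖f‖ ⊔ ‖g‖, by
    rintro _ ⟨a, rfl⟩
    exact abs_max_le_max_abs_abs.trans
      (sup_le_sup (abs_apply_le_norm f a) (abs_apply_le_norm g a))⟩⟩

instance : Min (Linf α) where
  min f g := ⟨fun a ↦ f a ⊓ g a, memℓp_infty ⟨‖f‖ ⊔ ‖g‖, by
    rintro _ ⟨a, rfl⟩
    exact abs_min_le_max_abs_abs.trans
      (sup_le_sup (abs_apply_le_norm f a) (abs_apply_le_norm g a))⟩⟩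

instance : Lattice (Linf α) :=
  Function.Injective.lattice (fun f ↦ (f : α → ℝ)) (fun _ _ ↦ lp.ext) Iff.rfl Iff.rfl
    (fun _ _ ↦ rfl) fun _ _ ↦ rfl

instance : IsOrderedAddMonoid (Linf α) where
  add_le_add_left _ _ h k a := add_le_add_left (h a) (k a)

instance : HasSolidNorm (Linf α) where
  solid _ g h := lp.norm_le_of_forall_le (norm_nonneg g) fun a ↦ (h a).trans (abs_apply_le_norm g a)

variable {G : Type*} [Group G]

/-- Left translation by `g` as an automorphism of the ordered group `ℓ∞(G)`. -/
def ltransOrderIso (g : G) : Linf G ≃+o Linf G where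
  toFun := ltrans g
  invFun := ltrans g⁻¹
  left_inv f := by ext h; simp [ltrans]
  right_inv f := by ext h; simp [ltrans]
  map_add' _ _ := rfl
  map_le_map_iff' {f k} := (Equiv.mulLeft g⁻¹).forall_congr_right (q := fun h ↦ f h ≤ k h)

end Linf

theorem amenable_iff_exists_nonzero_invariant_functional_general
    (G : Type*) [Group G] :
    (∃ μ : Linf G →L[ℝ] ℝ,
        (∀ f : Linf G, (∀ h : G, 0 ≤ f h) → 0 ≤ μ f) ∧ ‖μ‖ = 1 ∧
        (∀ (g : G) (f : Linf G), μ (ltrans g f) = μ f)) ↔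
      (∃ φ : Linf G →L[ℝ] ℝ, φ ≠ 0 ∧
        (∀ (g : G) (f : Linf G), φ (ltrans g f) = φ f)) := by
  constructor
  · rintro ⟨μ, -, hμ, hinv⟩
    exact ⟨μ, norm_ne_zero_iff.1 (hμ.trans_ne one_ne_zero), hinv⟩
  · rintro ⟨φ, hφ, hinv⟩
    refine ⟨‖φ‖⁻¹ • modulus φ, fun f hf ↦ ?_, ?_, fun g f ↦ ?_⟩
    · exact mul_nonneg (inv_nonneg.2 (norm_nonneg φ)) (modulus_nonneg φ hf)
    · rw [norm_smul, norm_inv, norm_norm, norm_modulus, inv_mul_cancel₀ (norm_ne_zero_iff.2 hφ)]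
    · exact congrArg (‖φ‖⁻¹ * ·)
        (modulus_map_of_forall_map_eq (Linf.ltransOrderIso g) (hinv g) f)

/-- A countable discrete group `G` is amenable (admits a left-invariant mean on `ℓ∞(G)`)
if and only if there exists a nonzero continuous `G`-invariant linear functional on `ℓ∞(G)`. -/
theorem amenable_iff_exists_nonzero_invariant_functional
    (G : Type*) [Group G] [Countable G] :
    (∃ μ : Linf G →L[ℝ] ℝ,
        (∀ f : Linf G, (∀ h : G, 0 ≤ f h) → 0 ≤ μ f) ∧ ‖μ‖ = 1 ∧
        (∀ (g : G) (f : Linf G), μ (ltrans g f) = μ f)) ↔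
      (∃ φ : Linf G →L[ℝ] ℝ, φ ≠ 0 ∧
        (∀ (g : G) (f : Linf G), φ (ltrans g f) = φ f)) :=
  amenable_iff_exists_nonzero_invariant_functional_general G
end
end

section
/- A countable discrete group G is amenable if and only if there exists a continuous linear functional m on the quotient space ℓ∞(G)/ℝ such that for every g ∈ G and every f ∈ ℓ∞(G), m([h ↦ f(gh)] − [f]) = f(g) − f(e). (This condition says exactly that the Johnson class, i.e. the class of the cocycle g ↦ J_g, vanishes in H¹(G, (ℓ∞(G)/ℝ)*).) -/
noncomputable section
open scoped ENNReal

/-- The subspace of constant functions in `ℓ∞(G)` (the span of the constant function `1`). -/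
def Consts (G : Type*) : Submodule ℝ (Linf G) := Submodule.span ℝ {lone G}

/-- Right translation: `(rt g f)(h) = f (g h)`, i.e. the function `h ↦ f (g h)`. -/
def rt {G : Type*} [Group G] (g : G) (f : Linf G) : Linf G :=
  ⟨fun h => f (g * h),
    memℓp_infty ⟨‖f‖, by
      rintro x ⟨h, rfl⟩
      exact lp.norm_apply_le_norm ENNReal.top_ne_zero f (g * h)⟩⟩

/-!
Writing a functional on `ℓ∞(G)/ℝ` as `m`, the relation `m ([h ↦ f (g h)] - [f]) = f g - f 1` says
exactly that the functional `ν f = f 1 - m [f]` on `ℓ∞(G)` is invariant, and `ν 1 = 1` because `m`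
does not see the constants; conversely `δ₁ - ν` descends to `ℓ∞(G)/ℝ`. An invariant mean is such
a `ν`. An invariant `ν` with `ν 1 = 1` need not be positive, but its Riesz positive part, given by
`ν⁺ f = sup {ν k | 0 ≤ k ≤ f}` for `f ≥ 0`, is, and it inherits invariance since translations
are lattice automorphisms. Moreover `ν⁺ 1 ≥ ν 1 = 1`, so `ν⁺` can be normalized to a mean.
-/

open Set
open scoped Pointwise

theorem Icc_add_Icc_of_lattice {E : Type*} [AddCommGroup E] [Lattice E] [IsOrderedAddMonoid E]
    {a b c d : E} (hab : a ≤ b) (hcd : c ≤ d) : Icc a b + Icc c d = Icc (a + c) (b + d) := by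
  refine (Icc_add_Icc_subset a b c d).antisymm fun x ⟨hacx, hxbd⟩ => ?_
  have hsub : x - (x - c) ⊓ b = c ⊔ (x - b) := by rw [sub_inf, sub_sub_cancel]
  refine ⟨(x - c) ⊓ b, ⟨le_inf (le_sub_iff_add_le.2 hacx) hab, inf_le_right⟩,
    x - (x - c) ⊓ b, ?_, add_sub_cancel _ _⟩
  rw [hsub]
  exact ⟨le_sup_left, sup_le hcd (sub_le_iff_le_add'.2 hxbd)⟩

theorem norm_eq_apply_of_orderUnit {E : Type*} [SeminormedAddCommGroup E] [NormedSpace ℝ E]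
    [PartialOrder E] [IsOrderedAddMonoid E] {u : E} (hu : 0 ≤ u) (hu_norm : ‖u‖ ≤ 1)
    (hu_unit : ∀ f : E, f ≤ ‖f‖ • u) {μ : E →L[ℝ] ℝ} (hμ : ∀ f, 0 ≤ f → 0 ≤ μ f) :
    ‖μ‖ = μ u := by
  have apply_le (f : E) : μ f ≤ μ u * ‖f‖ := by
    have h := hμ _ (sub_nonneg.2 (hu_unit f))
    rwa [map_sub, map_smul, smul_eq_mul, mul_comm, sub_nonneg] at h
  apply le_antisymm
  · refine μ.opNorm_le_bound (hμ u hu) fun f => abs_le'.2 ⟨apply_le f, ?_⟩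
    simpa only [map_neg, norm_neg] using apply_le (-f)
  · exact (le_abs_self _).trans (μ.unit_le_opNorm u hu_norm)

section RieszPosPart

variable {E : Type*} [NormedAddCommGroup E] [NormedSpace ℝ E] [Lattice E]

/-- The supremum of `ν` over the order interval `[0, f]`: the value at `f ≥ 0` of the positive part
of `ν`. For other `f` the interval is empty and the value is the junk `sSup ∅ = 0`. -/
def intervalSup (ν : E →L[ℝ] ℝ) (f : E) : ℝ := sSup (ν '' Icc 0 f)

section SolidNorm

variable [HasSolidNorm E] [IsOrderedAddMonoid E] (ν : E →L[ℝ] ℝ) {f g : E}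

theorem apply_le_opNorm_mul_norm_of_mem_Icc {k : E} (hk : k ∈ Icc 0 f) : ν k ≤ ‖ν‖ * ‖f‖ := by
  have hkf : ‖k‖ ≤ ‖f‖ := norm_le_norm_of_abs_le_abs (abs_le_abs_of_nonneg hk.1 hk.2)
  calc ν k ≤ ‖ν k‖ := le_abs_self _
    _ ≤ ‖ν‖ * ‖f‖ := ν.le_opNorm_of_le hkf

theorem bddAbove_image_Icc_zero (f : E) : BddAbove (ν '' Icc 0 f) :=
  ⟨‖ν‖ * ‖f‖, forall_mem_image.2 fun _ => apply_le_opNorm_mul_norm_of_mem_Icc ν⟩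

theorem le_intervalSup {k : E} (hk : k ∈ Icc 0 f) : ν k ≤ intervalSup ν f :=
  le_csSup (bddAbove_image_Icc_zero ν f) (mem_image_of_mem ν hk)

theorem intervalSup_nonneg (hf : 0 ≤ f) : 0 ≤ intervalSup ν f := by
  simpa only [map_zero] using le_intervalSup ν (left_mem_Icc.2 hf)

theorem intervalSup_le_opNorm_mul_norm (hf : 0 ≤ f) : intervalSup ν f ≤ ‖ν‖ * ‖f‖ :=
  csSup_le ((nonempty_Icc.2 hf).image ν) <|
    forall_mem_image.2 fun _ => apply_le_opNorm_mul_norm_of_mem_Icc ν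

theorem intervalSup_add (hf : 0 ≤ f) (hg : 0 ≤ g) :
    intervalSup ν (f + g) = intervalSup ν f + intervalSup ν g := by
  have hIcc : Icc 0 (f + g) = Icc 0 f + Icc 0 g := by
    rw [Icc_add_Icc_of_lattice hf hg, add_zero]
  rw [intervalSup, hIcc, image_add]
  exact csSup_add ((nonempty_Icc.2 hf).image ν) (bddAbove_image_Icc_zero ν f)
    ((nonempty_Icc.2 hg).image ν) (bddAbove_image_Icc_zero ν g)

theorem intervalSup_posPart_sub_negPart_add (f g : E) :
    intervalSup ν (f + g)⁺ - intervalSup ν (f + g)⁻ =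
      (intervalSup ν f⁺ - intervalSup ν f⁻) + (intervalSup ν g⁺ - intervalSup ν g⁻) := by
  have hparts : (f + g)⁺ + (f⁻ + g⁻) = (f⁺ + g⁺) + (f + g)⁻ := by
    rw [← sub_eq_sub_iff_add_eq_add, posPart_sub_negPart, add_sub_add_comm,
      posPart_sub_negPart, posPart_sub_negPart]
  have h := congrArg (intervalSup ν) hparts
  rw [intervalSup_add ν (posPart_nonneg _) (add_nonneg (negPart_nonneg f) (negPart_nonneg g)),
    intervalSup_add ν (negPart_nonneg f) (negPart_nonneg g),
    intervalSup_add ν (add_nonneg (posPart_nonneg f) (posPart_nonneg g)) (negPart_nonneg _),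
    intervalSup_add ν (posPart_nonneg f) (posPart_nonneg g)] at h
  linarith

theorem abs_intervalSup_posPart_sub_negPart_le (f : E) :
    |intervalSup ν f⁺ - intervalSup ν f⁻| ≤ ‖ν‖ * ‖f‖ := by
  have hpos : ‖f⁺‖ ≤ ‖f‖ := norm_le_norm_of_abs_le_abs <| by
    rw [abs_of_nonneg (posPart_nonneg f), ← posPart_add_negPart f]
    exact le_add_of_nonneg_right (negPart_nonneg f)
  have hneg : ‖f⁻‖ ≤ ‖f‖ := norm_le_norm_of_abs_le_abs <| by
    rw [abs_of_nonneg (negPart_nonneg f), ← posPart_add_negPart f]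
    exact le_add_of_nonneg_left (posPart_nonneg f)
  refine abs_sub_le_of_nonneg_of_le (intervalSup_nonneg ν (posPart_nonneg f)) ?_
    (intervalSup_nonneg ν (negPart_nonneg f)) ?_
  · exact (intervalSup_le_opNorm_mul_norm ν (posPart_nonneg f)).trans (by gcongr)
  · exact (intervalSup_le_opNorm_mul_norm ν (negPart_nonneg f)).trans (by gcongr)

/-- The positive part `ν⁺` of a continuous functional `ν` on a normed lattice (the Riesz–Kantorovich
construction). Its homogeneity is not proved separately: a continuous additive map between real
normed spaces is linear. -/
def rieszPosPart : E →L[ℝ] ℝ :=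
  AddMonoidHom.toRealLinearMap
    (AddMonoidHom.mk' (fun f => intervalSup ν f⁺ - intervalSup ν f⁻)
      (intervalSup_posPart_sub_negPart_add ν))
    (AddMonoidHomClass.continuous_of_bound _ ‖ν‖ (abs_intervalSup_posPart_sub_negPart_le ν))

theorem rieszPosPart_apply (f : E) :
    rieszPosPart ν f = intervalSup ν f⁺ - intervalSup ν f⁻ := rfl

theorem rieszPosPart_of_nonneg (hf : 0 ≤ f) : rieszPosPart ν f = intervalSup ν f := by
  have intervalSup_zero : intervalSup ν 0 = 0 := by simp [intervalSup]
  rw [rieszPosPart_apply, posPart_eq_self.2 hf, negPart_eq_zero.2 hf, intervalSup_zero, sub_zero]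

theorem rieszPosPart_nonneg (hf : 0 ≤ f) : 0 ≤ rieszPosPart ν f := by
  rw [rieszPosPart_of_nonneg ν hf]
  exact intervalSup_nonneg ν hf

theorem le_rieszPosPart (hf : 0 ≤ f) : ν f ≤ rieszPosPart ν f := by
  rw [rieszPosPart_of_nonneg ν hf]
  exact le_intervalSup ν (right_mem_Icc.2 hf)

end SolidNorm

variable {ν : E →L[ℝ] ℝ}

theorem intervalSup_map_of_invariant (e : E ≃+o E) (he : ∀ f, ν (e f) = ν f) (f : E) :
    intervalSup ν (e f) = intervalSup ν f := by
  have hIcc : Icc 0 (e f) = e '' Icc 0 f :=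
    calc Icc 0 (e f) = Icc (e 0) (e f) := by rw [map_zero]
      _ = e '' Icc 0 f := ((e : E ≃o E).image_Icc 0 f).symm
  rw [intervalSup, hIcc, image_image]
  simp only [he, intervalSup]

variable [HasSolidNorm E] [IsOrderedAddMonoid E]

theorem rieszPosPart_map_of_invariant (e : E ≃+o E) (he : ∀ f, ν (e f) = ν f) (f : E) :
    rieszPosPart ν (e f) = rieszPosPart ν f := by
  have map_posPart (k : E) : (e k)⁺ = e k⁺ := by
    rw [posPart_def, posPart_def, map_sup, map_zero]
  have map_negPart : (e f)⁻ = e f⁻ := by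
    rw [← posPart_neg, ← posPart_neg, ← map_neg, map_posPart]
  rw [rieszPosPart_apply, map_posPart, map_negPart, intervalSup_map_of_invariant e he,
    intervalSup_map_of_invariant e he, rieszPosPart_apply]

theorem exists_nonneg_norm_eq_one_of_apply_pos {u : E} (hu : 0 ≤ u) (hνu : 0 < ν u) :
    ∃ μ : E →L[ℝ] ℝ, (∀ f, 0 ≤ f → 0 ≤ μ f) ∧ ‖μ‖ = 1 ∧
      ∀ e : E ≃+o E, (∀ f, ν (e f) = ν f) → ∀ f, μ (e f) = μ f := by
  have hne : rieszPosPart ν ≠ 0 := by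
    intro h
    have := le_rieszPosPart ν hu
    rw [h, zero_apply] at this
    exact this.not_gt hνu
  refine ⟨‖rieszPosPart ν‖⁻¹ • rieszPosPart ν, fun f hf => ?_, norm_smul_inv_norm hne,
    fun e he f => ?_⟩
  · exact mul_nonneg (inv_nonneg.2 (norm_nonneg _)) (rieszPosPart_nonneg ν hf)
  · rw [smul_apply, rieszPosPart_map_of_invariant e he,
      smul_apply]

end RieszPosPart

namespace Linf

variable {G : Type*}

theorem norm_apply_le_norm (f : Linf G) (x : G) : ‖f x‖ ≤ ‖f‖ :=
  lp.norm_apply_le_norm ENNReal.top_ne_zero f x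

/-- The pointwise order on `ℓ∞(G)`, which makes it a normed lattice. -/
instance : Lattice (Linf G) where
  le f g := ∀ x, f x ≤ g x
  le_refl _ _ := le_rfl
  le_trans _ _ _ hfg hgk x := (hfg x).trans (hgk x)
  le_antisymm _ _ hfg hgf := lp.ext <| funext fun x => (hfg x).antisymm (hgf x)
  sup f g := ⟨fun x => f x ⊔ g x, memℓp_infty ⟨‖f‖ + ‖g‖, forall_mem_range.2 fun x =>
    (norm_sup_le_add (f x) (g x)).trans <|
      add_le_add (norm_apply_le_norm f x) (norm_apply_le_norm g x)⟩⟩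
  inf f g := ⟨fun x => f x ⊓ g x, memℓp_infty ⟨‖f‖ + ‖g‖, forall_mem_range.2 fun x =>
    (norm_inf_le_add (f x) (g x)).trans <|
      add_le_add (norm_apply_le_norm f x) (norm_apply_le_norm g x)⟩⟩
  le_sup_left _ _ _ := le_sup_left
  le_sup_right _ _ _ := le_sup_right
  sup_le _ _ _ hf hg x := sup_le (hf x) (hg x)
  inf_le_left _ _ _ := inf_le_left
  inf_le_right _ _ _ := inf_le_right
  le_inf _ _ _ hf hg x := le_inf (hf x) (hg x)

instance : IsOrderedAddMonoid (Linf G) where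
  add_le_add_left _ _ hfg k x := add_le_add_left (hfg x) (k x)

instance : HasSolidNorm (Linf G) where
  solid _ g hfg := lp.norm_le_of_forall_le (norm_nonneg g) fun x =>
    (hfg x).trans (norm_apply_le_norm g x)

theorem lone_nonneg : 0 ≤ lone G := fun _ => zero_le_one

theorem norm_lone_le_one : ‖lone G‖ ≤ 1 :=
  lp.norm_le_of_forall_le zero_le_one fun _ => norm_one.le

theorem le_norm_smul_lone (f : Linf G) : f ≤ ‖f‖ • lone G := fun x =>
  calc f x ≤ ‖f x‖ := le_abs_self _
    _ ≤ ‖f‖ := norm_apply_le_norm f x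
    _ = ‖f‖ * 1 := (mul_one _).symm

end Linf

section Johnson

variable {G : Type*} [Group G]

/-- Left translation by `g` as an automorphism of the ordered group `ℓ∞(G)`, the form in which
invariance passes to positive parts. -/
def ltransOrderAddIso (g : G) : Linf G ≃+o Linf G where
  toFun := ltrans g
  invFun := ltrans g⁻¹
  left_inv f := lp.ext <| funext fun x => congrArg f <| by simp
  right_inv f := lp.ext <| funext fun x => congrArg f <| by simp
  map_add' _ _ := rfl
  map_le_map_iff' {f k} := (Equiv.mulLeft g⁻¹).forall_congr_right (q := fun x => f x ≤ k x)

/-- A functional on `ℓ∞(G)`, not necessarily positive, that is fixed by all left translations. -/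
def IsLeftInvariant (ν : Linf G →L[ℝ] ℝ) : Prop :=
  ∀ (g : G) (f : Linf G), ν (ltrans g f) = ν f

theorem exists_invariant_mean_iff_exists_isLeftInvariant :
    (∃ μ : Linf G →L[ℝ] ℝ, (∀ f : Linf G, (∀ h : G, 0 ≤ f h) → 0 ≤ μ f) ∧ ‖μ‖ = 1 ∧
        IsLeftInvariant μ) ↔
      ∃ ν : Linf G →L[ℝ] ℝ, ν (lone G) = 1 ∧ IsLeftInvariant ν := by
  constructor
  · rintro ⟨μ, hpos, hnorm, hinv⟩
    have hnorm_eq : ‖μ‖ = μ (lone G) :=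
      norm_eq_apply_of_orderUnit Linf.lone_nonneg Linf.norm_lone_le_one
        Linf.le_norm_smul_lone hpos
    exact ⟨μ, hnorm_eq.symm.trans hnorm, hinv⟩
  · rintro ⟨ν, hone, hinv⟩
    obtain ⟨μ, hpos, hnorm, hμ⟩ :=
      exists_nonneg_norm_eq_one_of_apply_pos Linf.lone_nonneg (zero_lt_one.trans_eq hone.symm)
    exact ⟨μ, hpos, hnorm, fun g => hμ (ltransOrderAddIso g) (hinv g)⟩

/-- A functional `m` on `ℓ∞(G)/ℝ` whose coboundary `g ↦ g · m - m` is the Johnson cocycle `J`: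
since `rt g f = g⁻¹ · f`, the two sides of the equation are `(g · m - m) [f]` and `J_g [f]`. -/
def IsJohnsonPrimitive (m : (Linf G ⧸ Consts G) →L[ℝ] ℝ) : Prop :=
  ∀ (g : G) (f : Linf G),
    m (Submodule.Quotient.mk (rt g f) - Submodule.Quotient.mk f) = f g - f 1

theorem isJohnsonPrimitive_iff_isLeftInvariant (m : (Linf G ⧸ Consts G) →L[ℝ] ℝ) :
    IsJohnsonPrimitive m ↔
      IsLeftInvariant (lp.evalCLM ℝ (fun _ : G => ℝ) ∞ 1 - m.comp (Consts G).mkQL) := by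
  have ltrans_inv (g : G) (f : Linf G) : ltrans g⁻¹ f = rt g f :=
    lp.ext <| funext fun x => congrArg (fun k => f (k * x)) (inv_inv g)
  have hiff (g : G) (f : Linf G) :
      m (Submodule.Quotient.mk (rt g f) - Submodule.Quotient.mk f) = f g - f 1 ↔
        (rt g f) 1 - m (Submodule.Quotient.mk (rt g f)) = f 1 - m (Submodule.Quotient.mk f) := by
    have hg : (rt g f) 1 = f g := congrArg f (mul_one g)
    rw [map_sub, hg]
    constructor <;> intro h <;> linarith
  rw [IsLeftInvariant, ← (Equiv.inv G).forall_congr_right]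
  refine forall₂_congr fun g f => ?_
  rw [Equiv.inv_apply, ltrans_inv]
  exact hiff g f

theorem exists_isJohnsonPrimitive_iff_exists_isLeftInvariant :
    (∃ m : (Linf G ⧸ Consts G) →L[ℝ] ℝ, IsJohnsonPrimitive m) ↔
      ∃ ν : Linf G →L[ℝ] ℝ, ν (lone G) = 1 ∧ IsLeftInvariant ν := by
  constructor
  · rintro ⟨m, hm⟩
    refine ⟨_, ?_, (isJohnsonPrimitive_iff_isLeftInvariant m).1 hm⟩
    have hmk : (Consts G).mkQL (lone G) = 0 :=
      (Submodule.Quotient.mk_eq_zero _).2 (Submodule.mem_span_singleton_self _)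
    rw [sub_apply, ContinuousLinearMap.comp_apply, hmk, map_zero, sub_zero]
    rfl
  · rintro ⟨ν, hone, hinv⟩
    let δ : Linf G →L[ℝ] ℝ := lp.evalCLM ℝ (fun _ : G => ℝ) ∞ 1
    have hker : Consts G ≤ (δ - ν).ker :=
      (Submodule.span_singleton_le_iff_mem _ _).2 (sub_eq_zero.2 hone.symm)
    have hν : δ - ((Consts G).liftQL (δ - ν) hker).comp (Consts G).mkQL = ν :=
      ContinuousLinearMap.ext fun f => sub_sub_cancel (δ f) (ν f)
    exact ⟨(Consts G).liftQL (δ - ν) hker,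
      (isJohnsonPrimitive_iff_isLeftInvariant _).2 (hν.symm ▸ hinv)⟩

end Johnson

theorem amenable_iff_johnson_class_vanishes_general
    (G : Type*) [Group G] :
    (∃ μ : Linf G →L[ℝ] ℝ,
        (∀ f : Linf G, (∀ h : G, 0 ≤ f h) → 0 ≤ μ f) ∧ ‖μ‖ = 1 ∧
        (∀ (g : G) (f : Linf G), μ (ltrans g f) = μ f)) ↔
      (∃ m : (Linf G ⧸ Consts G) →L[ℝ] ℝ,
        ∀ (g : G) (f : Linf G),
          m (Submodule.Quotient.mk (rt g f) - Submodule.Quotient.mk f) = f g - f 1) :=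
  exists_invariant_mean_iff_exists_isLeftInvariant.trans
    exists_isJohnsonPrimitive_iff_exists_isLeftInvariant.symm

/-- A countable discrete group `G` is amenable if and only if there exists a continuous
linear functional `m` on `ℓ∞(G)/ℝ` with `m([h ↦ f(gh)] − [f]) = f(g) − f(e)` for all
`g ∈ G`, `f ∈ ℓ∞(G)`; i.e. the Johnson class vanishes in `H¹(G, (ℓ∞(G)/ℝ)*)`. -/
theorem amenable_iff_johnson_class_vanishes
    (G : Type*) [Group G] [Countable G] :
    (∃ μ : Linf G →L[ℝ] ℝ,
        (∀ f : Linf G, (∀ h : G, 0 ≤ f h) → 0 ≤ μ f) ∧ ‖μ‖ = 1 ∧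
        (∀ (g : G) (f : Linf G), μ (ltrans g f) = μ f)) ↔
      (∃ m : (Linf G ⧸ Consts G) →L[ℝ] ℝ,
        ∀ (g : G) (f : Linf G),
          m (Submodule.Quotient.mk (rt g f) - Submodule.Quotient.mk f) = f g - f 1) :=
  amenable_iff_johnson_class_vanishes_general G
end
end

section
/- A countable discrete group G is amenable if and only if the constant function 1 does not lie in the linear span of the set {g·f − f : g ∈ G, f ∈ ℓ∞(G)} inside ℓ∞(G). (This is the non-vanishing of the Block–Weinberger fundamental class ι[1] in H₀(G, ℓ∞(G)).) -/
noncomputable section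
open scoped ENNReal

/-!
The point is that the span `B` of the functions `g · f - f` contains every `u` with `0 ≤ u ≤ h` for
some `h ∈ B`. Write `h = ∑ i, (gᵢ · fᵢ - fᵢ)` with `fᵢ ≥ 0` and read `fᵢ x` as mass sent from `x`
to `gᵢ x`, so that `h` is inflow minus outflow. Keeping the fraction `t x` of the mass entering each
`x` leaves the surplus `t x * inflow x - ∑ i, t (gᵢ x) * fᵢ x`; asking that it be `u x` is a
monotone fixed-point equation for `t : G → [0, 1]`, which Knaster–Tarski solves.

Hence if `1 ∉ B`, then no element of `B` is bounded below by a positive constant, so `1` has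
distance `1` from `B`, and Hahn–Banach gives a norm-one functional that vanishes on `B` and takes
`1` to `1`. Such a functional is an invariant mean.
-/

/-- The subspace `B` of `ℓ∞(G)` spanned by the functions `g · f - f`, whose quotient
`ℓ∞(G) ⧸ B` is the coinvariant space `H₀(G, ℓ∞(G))`. -/
def coboundaries (G : Type*) [Group G] : Submodule ℝ (Linf G) :=
  Submodule.span ℝ {x : Linf G | ∃ (g : G) (f : Linf G), x = ltrans g f - f}

/-- A mean on `G` invariant under left translation; a group is amenable if it admits one. -/
def IsInvariantMean {G : Type*} [Group G] (μ : Linf G →L[ℝ] ℝ) : Prop :=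
  (∀ f : Linf G, (∀ h : G, 0 ≤ f h) → 0 ≤ μ f) ∧ ‖μ‖ = 1 ∧
    ∀ (g : G) (f : Linf G), μ (ltrans g f) = μ f

section BoundedFunctions

variable {X : Type*}

theorem lone_apply (x : X) : lone X x = 1 :=
  rfl

theorem Linf.add_apply (f g : Linf X) (x : X) : (f + g) x = f x + g x :=
  rfl

theorem Linf.sub_apply (f g : Linf X) (x : X) : (f - g) x = f x - g x :=
  rfl

theorem Linf.mul_apply (f g : Linf X) (x : X) : (f * g) x = f x * g x :=
  rfl

theorem Linf.smul_apply (c : ℝ) (f : Linf X) (x : X) : (c • f) x = c * f x :=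
  rfl

theorem Linf.sum_apply {ι : Type*} (s : Finset ι) (f : ι → Linf X) (x : X) :
    (∑ i ∈ s, f i) x = ∑ i ∈ s, f i x := by
  rw [lp.coeFn_sum, Finset.sum_apply]

theorem Linf.abs_apply_le_norm_s4 (f : Linf X) (x : X) : |f x| ≤ ‖f‖ :=
  lp.norm_apply_le_norm ENNReal.top_ne_zero f x

theorem Linf.apply_le_norm (f : Linf X) (x : X) : f x ≤ ‖f‖ :=
  (le_abs_self _).trans (abs_apply_le_norm_s4 f x)

theorem Linf.norm_le_of_forall_abs_le {f : Linf X} {C : ℝ} (hC : 0 ≤ C) (h : ∀ x, |f x| ≤ C) :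
    ‖f‖ ≤ C :=
  lp.norm_le_of_forall_le hC h

theorem norm_lone_le_one : ‖lone X‖ ≤ 1 :=
  Linf.norm_le_of_forall_abs_le zero_le_one fun _ => by simp [lone_apply]

theorem Linf.norm_smul_lone_sub_le {f : Linf X} (hf : ∀ x, 0 ≤ f x) :
    ‖‖f‖ • lone X - f‖ ≤ ‖f‖ :=
  norm_le_of_forall_abs_le (norm_nonneg f) fun x => by
    rw [sub_apply, smul_apply, lone_apply, mul_one,
      abs_of_nonneg (sub_nonneg.mpr (apply_le_norm f x))]
    exact sub_le_self _ (hf x)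

theorem eq_zero_of_nonneg_of_map_lone_eq_zero {μ : Linf X →L[ℝ] ℝ}
    (hpos : ∀ f : Linf X, (∀ x, 0 ≤ f x) → 0 ≤ μ f) (h : μ (lone X) = 0) : μ = 0 := by
  have hle (f : Linf X) : μ f ≤ 0 := by
    have hnonneg : 0 ≤ μ (‖f‖ • lone X - f) := hpos _ fun x => by
      rw [Linf.sub_apply, Linf.smul_apply, lone_apply, mul_one]
      exact sub_nonneg.mpr (Linf.apply_le_norm f x)
    simpa [h] using hnonneg
  ext f
  exact le_antisymm (hle f) (by simpa using hle (-f))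

theorem norm_eq_one_of_map_lone_eq_one {μ : Linf X →L[ℝ] ℝ} (hμ : ‖μ‖ ≤ 1)
    (h : μ (lone X) = 1) : ‖μ‖ = 1 := by
  refine hμ.antisymm ?_
  calc
    1 = ‖μ (lone X)‖ := by simp [h]
    _ ≤ ‖μ‖ * ‖lone X‖ := μ.le_opNorm _
    _ ≤ ‖μ‖ := mul_le_of_le_one_right (norm_nonneg μ) norm_lone_le_one

theorem map_nonneg_of_map_lone_eq_one {μ : Linf X →L[ℝ] ℝ} (hμ : ‖μ‖ ≤ 1)
    (h : μ (lone X) = 1) {f : Linf X} (hf : ∀ x, 0 ≤ f x) : 0 ≤ μ f := by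
  have hle : ‖f‖ - μ f ≤ ‖f‖ := calc
    ‖f‖ - μ f = μ (‖f‖ • lone X - f) := by simp [h]
    _ ≤ ‖μ (‖f‖ • lone X - f)‖ := Real.le_norm_self _
    _ ≤ ‖‖f‖ • lone X - f‖ := μ.le_of_opNorm_le_of_le hμ le_rfl |>.trans_eq (one_mul _)
    _ ≤ ‖f‖ := Linf.norm_smul_lone_sub_le hf
  linarith

end BoundedFunctions

theorem exists_dual_apply_eq_norm_mk {E : Type*} [SeminormedAddCommGroup E] [NormedSpace ℝ E]
    (S : Submodule ℝ E) (x : E) :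
    ∃ μ : E →L[ℝ] ℝ, ‖μ‖ ≤ 1 ∧ μ x = ‖(Submodule.Quotient.mk x : E ⧸ S)‖ ∧
      ∀ y ∈ S, μ y = 0 := by
  obtain ⟨ν, hν, hνx⟩ := exists_dual_vector'' ℝ (Submodule.Quotient.mk x : E ⧸ S)
  have hbound (y : E) : ‖ν (S.mkQ y)‖ ≤ 1 * ‖y‖ :=
    ν.le_of_opNorm_le_of_le hν (Submodule.Quotient.norm_mk_le S y)
  refine ⟨(ν.toLinearMap ∘ₗ S.mkQ).mkContinuous 1 hbound,
    LinearMap.mkContinuous_norm_le _ zero_le_one _, hνx, fun y hy => ?_⟩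
  simp [(Submodule.Quotient.mk_eq_zero S).mpr hy]

-- Here `c x` is the mass entering `x`, `w i x` the mass sent from `x` to `σ i x`, and `t x` the
-- fraction kept of the mass entering `x`.
theorem exists_unitInterval_mul_eq_add_sum {ι X : Type*} [Fintype ι] (σ : ι → X → X)
    {w : ι → X → ℝ} {u c : X → ℝ} (hw : ∀ i x, 0 ≤ w i x) (hu : ∀ x, 0 ≤ u x)
    (hc : ∀ x, u x + ∑ i, w i x ≤ c x) :
    ∃ t : X → unitInterval, ∀ x, t x * c x = u x + ∑ i, (t (σ i x) : ℝ) * w i x := by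
  let demand (t : X → unitInterval) (x : X) : ℝ := u x + ∑ i, (t (σ i x) : ℝ) * w i x
  have demand_nonneg t x : 0 ≤ demand t x :=
    add_nonneg (hu x) (Finset.sum_nonneg fun i _ => mul_nonneg (unitInterval.nonneg _) (hw i x))
  have demand_le t x : demand t x ≤ c x :=
    (add_le_add_right (Finset.sum_le_sum fun i _ =>
      mul_le_of_le_one_left (hw i x) (unitInterval.le_one _)) _).trans (hc x)
  have c_nonneg x : 0 ≤ c x := (demand_nonneg 0 x).trans (demand_le 0 x)
  have demand_mono {s t} (hst : s ≤ t) x : demand s x ≤ demand t x :=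
    add_le_add_right (Finset.sum_le_sum fun i _ =>
      mul_le_mul_of_nonneg_right (Subtype.coe_le_coe.mpr (hst (σ i x))) (hw i x)) _
  let T : (X → unitInterval) →o (X → unitInterval) :=
    { toFun t x := ⟨demand t x / c x,
        div_nonneg (demand_nonneg t x) (c_nonneg x),
        div_le_one_of_le₀ (demand_le t x) (c_nonneg x)⟩
      monotone' _ _ hst x := div_le_div_of_nonneg_right (demand_mono hst x) (c_nonneg x) }
  refine ⟨T.lfp, fun x => ?_⟩
  have hfix : (T.lfp x : ℝ) = demand T.lfp x / c x :=
    congrArg Subtype.val (congrFun T.map_lfp x).symm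
  rw [hfix]
  refine div_mul_cancel_of_imp fun hcx => ?_
  exact le_antisymm ((demand_le _ x).trans_eq hcx) (demand_nonneg _ x)

section Group

variable {G : Type*} [Group G]

theorem ltrans_apply (g : G) (f : Linf G) (x : G) : ltrans g f x = f (g⁻¹ * x) :=
  rfl

theorem ltrans_sub_self_mem_coboundaries (g : G) (f : Linf G) :
    ltrans g f - f ∈ coboundaries G :=
  Submodule.subset_span ⟨g, f, rfl⟩

theorem smul_ltrans_sub_self (c : ℝ) (g : G) (f : Linf G) :
    c • (ltrans g f - f) = ltrans g (c • f) - c • f := by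
  ext x
  simp only [Linf.smul_apply, Linf.sub_apply, ltrans_apply, mul_sub]

theorem ltrans_add_smul_lone_sub_self (c : ℝ) (g : G) (f : Linf G) :
    ltrans g (f + c • lone G) - (f + c • lone G) = ltrans g f - f := by
  ext x
  simp only [Linf.sub_apply, Linf.add_apply, Linf.smul_apply, ltrans_apply, lone_apply]
  ring

theorem exists_nonneg_eq_sum_of_mem_coboundaries {h : Linf G} (hh : h ∈ coboundaries G) :
    ∃ (n : ℕ) (g : Fin n → G) (f : Fin n → Linf G), (∀ i x, 0 ≤ f i x) ∧
      h = ∑ i, (ltrans (g i) (f i) - f i) := by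
  obtain ⟨n, c, v, rfl⟩ := Submodule.mem_span_set'.mp hh
  choose g f hgf using fun i => (v i).2
  refine ⟨n, g, fun i => c i • f i + ‖c i • f i‖ • lone G, fun i x => ?_,
    Finset.sum_congr rfl fun i _ => ?_⟩
  · have hlower : -‖c i • f i‖ ≤ (c i • f i) x := neg_le_of_abs_le (Linf.abs_apply_le_norm_s4 _ x)
    rw [Linf.add_apply, Linf.smul_apply ‖_‖, lone_apply, mul_one]
    linarith
  · rw [hgf, smul_ltrans_sub_self, ltrans_add_smul_lone_sub_self]

theorem mem_coboundaries_of_nonneg_of_le {u h : Linf G} (hh : h ∈ coboundaries G)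
    (hu : ∀ x, 0 ≤ u x) (huh : ∀ x, u x ≤ h x) : u ∈ coboundaries G := by
  obtain ⟨n, g, f, hf, rfl⟩ := exists_nonneg_eq_sum_of_mem_coboundaries hh
  have hinflow x : u x + ∑ i, f i x ≤ ∑ i, f i ((g i)⁻¹ * x) := by
    have hx := huh x
    simp only [Linf.sum_apply, Linf.sub_apply, ltrans_apply, Finset.sum_sub_distrib] at hx
    linarith
  obtain ⟨t, ht⟩ := exists_unitInterval_mul_eq_add_sum (fun i x => g i * x) hf hu hinflow
  let τ : Linf G := ⟨fun x => t x, memℓp_infty ⟨1, by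
    rintro _ ⟨x, rfl⟩
    simpa [abs_of_nonneg (unitInterval.nonneg (t x))] using unitInterval.le_one (t x)⟩⟩
  have hτ x : τ x = t x := rfl
  have hsum : u = ∑ i, (ltrans (g i) (ltrans (g i)⁻¹ τ * f i) - ltrans (g i)⁻¹ τ * f i) := by
    ext x
    simp only [Linf.sum_apply, Linf.sub_apply, Linf.mul_apply, ltrans_apply, inv_inv,
      mul_inv_cancel_left, hτ, Finset.sum_sub_distrib, ← Finset.mul_sum, ht, add_sub_cancel_right]
  rw [hsum]
  exact Submodule.sum_mem _ fun i _ => ltrans_sub_self_mem_coboundaries _ _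

theorem lone_mem_coboundaries_of_forall_le {h : Linf G} (hh : h ∈ coboundaries G) {ε : ℝ}
    (hε : 0 < ε) (hle : ∀ x, ε ≤ h x) : lone G ∈ coboundaries G := by
  have hmem : ε • lone G ∈ coboundaries G :=
    mem_coboundaries_of_nonneg_of_le hh
      (fun _ => by simpa [Linf.smul_apply, lone_apply, -lp.coeFn_smul] using hε.le)
      (by simpa [Linf.smul_apply, lone_apply, -lp.coeFn_smul] using hle)
  exact (Submodule.smul_mem_iff _ hε.ne').mp hmem

theorem norm_mk_lone_eq_one (hG : lone G ∉ coboundaries G) :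
    ‖(Submodule.Quotient.mk (lone G) : Linf G ⧸ coboundaries G)‖ = 1 := by
  refine ((Submodule.Quotient.norm_mk_le _ _).trans norm_lone_le_one).antisymm ?_
  by_contra! hlt
  obtain ⟨f, hf, hf_lt⟩ := Submodule.Quotient.norm_mk_lt
    (Submodule.Quotient.mk (lone G) : Linf G ⧸ coboundaries G) (sub_pos.mpr hlt)
  rw [add_sub_cancel] at hf_lt
  refine hG (lone_mem_coboundaries_of_forall_le
    ((Submodule.Quotient.eq _).mp hf.symm) (sub_pos.mpr hf_lt) fun x => ?_)
  rw [Linf.sub_apply, lone_apply]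
  exact sub_le_sub_left (Linf.apply_le_norm f x) 1

theorem IsInvariantMean.map_eq_zero {μ : Linf G →L[ℝ] ℝ} (hμ : IsInvariantMean μ) {h : Linf G}
    (hh : h ∈ coboundaries G) : μ h = 0 := by
  have hle : coboundaries G ≤ LinearMap.ker (μ : Linf G →ₗ[ℝ] ℝ) :=
    Submodule.span_le.mpr fun _ ⟨g, f, hgf⟩ => by simp [hgf, hμ.2.2 g f]
  exact hle hh

theorem IsInvariantMean.lone_notMem_coboundaries {μ : Linf G →L[ℝ] ℝ} (hμ : IsInvariantMean μ) :
    lone G ∉ coboundaries G := fun hmem => by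
  have hμ0 : μ = 0 := eq_zero_of_nonneg_of_map_lone_eq_zero hμ.1 (hμ.map_eq_zero hmem)
  simpa [hμ0] using hμ.2.1

theorem exists_isInvariantMean_of_lone_notMem_coboundaries (hG : lone G ∉ coboundaries G) :
    ∃ μ : Linf G →L[ℝ] ℝ, IsInvariantMean μ := by
  obtain ⟨μ, hμ, hμ_lone, hμ_zero⟩ := exists_dual_apply_eq_norm_mk (coboundaries G) (lone G)
  rw [norm_mk_lone_eq_one hG] at hμ_lone
  exact ⟨μ, fun _ => map_nonneg_of_map_lone_eq_one hμ hμ_lone,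
    norm_eq_one_of_map_lone_eq_one hμ hμ_lone, fun g f =>
      sub_eq_zero.mp (map_sub μ _ f ▸ hμ_zero _ (ltrans_sub_self_mem_coboundaries g f))⟩

end Group

theorem amenable_iff_one_not_in_span_of_coboundaries_general (G : Type*) [Group G] :
    (∃ μ : Linf G →L[ℝ] ℝ, IsInvariantMean μ) ↔ lone G ∉ coboundaries G :=
  ⟨fun ⟨_, hμ⟩ => hμ.lone_notMem_coboundaries,
    exists_isInvariantMean_of_lone_notMem_coboundaries⟩

/-- A countable discrete group `G` is amenable if and only if the constant function `1`
does not lie in the linear span of `{g·f − f : g ∈ G, f ∈ ℓ∞(G)}` inside `ℓ∞(G)`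
(non-vanishing of the Block–Weinberger fundamental class in `H₀(G, ℓ∞(G))`). -/
theorem amenable_iff_one_not_in_span_of_coboundaries
    (G : Type*) [Group G] [Countable G] :
    (∃ μ : Linf G →L[ℝ] ℝ,
        (∀ f : Linf G, (∀ h : G, 0 ≤ f h) → 0 ≤ μ f) ∧ ‖μ‖ = 1 ∧
        (∀ (g : G) (f : Linf G), μ (ltrans g f) = μ f)) ↔
      lone G ∉ Submodule.span ℝ
        {x : Linf G | ∃ (g : G) (f : Linf G), x = ltrans g f - f} :=
  amenable_iff_one_not_in_span_of_coboundaries_general G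
end
end

section
/- Let G be a countable discrete group. If there exists a continuous linear functional m on ℓ∞(G)/ℝ such that m([h ↦ f(gh)] − [f]) = f(g) − f(e) for all g ∈ G and f ∈ ℓ∞(G), then there is no family (f_g)_{g ∈ G} of elements of ℓ∞(G) with Σ_{g ∈ G} ‖f_g‖_∞ < ∞ and Σ_{g ∈ G} (g·f_g − f_g) = 1 (sum converging in the supremum norm). (Concretely: vanishing of the Johnson class forces the non-vanishing of the fundamental class in ℓ¹-homology; this is the duality/pairing step of the main theorem.) -/
noncomputable section
open scoped ENNReal

section Translations

variable {G : Type*} [Group G]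

@[simp]
theorem rt_apply (g : G) (f : Linf G) (h : G) : rt g f h = f (g * h) := rfl

theorem ltrans_eq_rt_inv (g : G) (f : Linf G) : ltrans g f = rt g⁻¹ f := rfl

theorem map_eq_zero_of_hasSum_ltrans_sub {E : Type*} [AddCommGroup E] [Module ℝ E]
    [TopologicalSpace E] [T2Space E] {φ : Linf G →L[ℝ] E}
    (hφ : ∀ (g : G) (f : Linf G), φ (ltrans g f) = φ f)
    {ι : Type*} {g : ι → G} {F : ι → Linf G} {a : Linf G}
    (ha : HasSum (fun i => ltrans (g i) (F i) - F i) a) : φ a = 0 := by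
  have h_term (i : ι) : φ (ltrans (g i) (F i) - F i) = 0 := by
    rw [map_sub, hφ, sub_self]
  have h_sum : HasSum (fun i => φ (ltrans (g i) (F i) - F i)) (φ a) := φ.hasSum ha
  simp only [h_term] at h_sum
  exact h_sum.unique hasSum_zero

end Translations

theorem mkQL_lone (G : Type*) : (Consts G).mkQL (lone G) = 0 :=
  (Submodule.Quotient.mk_eq_zero _).2 (Submodule.mem_span_singleton_self _)

section InvariantFunctional

variable {G : Type*} [Group G]

/-- The functional `f ↦ f(e) - m[f]` on `ℓ∞(G)`. When `m` exhibits the vanishing of the Johnson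
class, it is the left-invariant functional (an invariant mean, except that it need not be
positive) that `m` encodes: the coboundary of `m` cancels the variation of evaluation at `e`
under translation, and `m` does not see the constants. -/
def invariantFunctional (m : (Linf G ⧸ Consts G) →L[ℝ] ℝ) : Linf G →L[ℝ] ℝ :=
  lp.evalCLM ℝ (fun _ : G => ℝ) ∞ 1 - m ∘L (Consts G).mkQL

theorem invariantFunctional_apply (m : (Linf G ⧸ Consts G) →L[ℝ] ℝ) (f : Linf G) :
    invariantFunctional m f = f 1 - m (Submodule.Quotient.mk f) := rfl

theorem invariantFunctional_lone (m : (Linf G ⧸ Consts G) →L[ℝ] ℝ) :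
    invariantFunctional m (lone G) = 1 := by
  calc invariantFunctional m (lone G)
      = 1 - m ((Consts G).mkQL (lone G)) := rfl
    _ = 1 := by rw [mkQL_lone, map_zero, sub_zero]

theorem invariantFunctional_ltrans {m : (Linf G ⧸ Consts G) →L[ℝ] ℝ}
    (hm : ∀ (g : G) (f : Linf G),
      m (Submodule.Quotient.mk (rt g f) - Submodule.Quotient.mk f) = f g - f 1)
    (g : G) (f : Linf G) :
    invariantFunctional m (ltrans g f) = invariantFunctional m f := by
  have h_coboundary : m (Submodule.Quotient.mk (rt g⁻¹ f)) - m (Submodule.Quotient.mk f) =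
      f g⁻¹ - f 1 := by
    rw [← map_sub, hm]
  rw [ltrans_eq_rt_inv, invariantFunctional_apply, invariantFunctional_apply, rt_apply, mul_one]
  linarith

end InvariantFunctional

theorem no_ell_one_family_of_johnson_class_vanishes_general
    {G : Type*} [Group G] (m : (Linf G ⧸ Consts G) →L[ℝ] ℝ)
    (hm : ∀ (g : G) (f : Linf G),
      m (Submodule.Quotient.mk (rt g f) - Submodule.Quotient.mk f) = f g - f 1) :
    ¬ ∃ F : G → Linf G, HasSum (fun g : G => ltrans g (F g) - F g) (lone G) := by
  rintro ⟨F, hF⟩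
  have h_zero : invariantFunctional m (lone G) = 0 :=
    map_eq_zero_of_hasSum_ltrans_sub (invariantFunctional_ltrans hm) hF
  exact one_ne_zero ((invariantFunctional_lone m).symm.trans h_zero)

/-- Vanishing of the Johnson class forces non-vanishing of the fundamental class in
`ℓ¹`-homology: if some continuous linear functional `m` on `ℓ∞(G)/ℝ` satisfies
`m([h ↦ f(gh)] − [f]) = f(g) − f(e)` for all `g, f`, then no family `(f_g)` in `ℓ∞(G)`
with `Σ_g ‖f_g‖_∞ < ∞` has `Σ_g (g·f_g − f_g) = 1` in the sup norm. -/
theorem no_ell_one_family_of_johnson_class_vanishes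
    (G : Type*) [Group G] [Countable G]
    (m : (Linf G ⧸ Consts G) →L[ℝ] ℝ)
    (hm : ∀ (g : G) (f : Linf G),
      m (Submodule.Quotient.mk (rt g f) - Submodule.Quotient.mk f) = f g - f 1) :
    ¬ ∃ F : G → Linf G, Summable (fun g : G => ‖F g‖) ∧
        HasSum (fun g : G => ltrans g (F g) - F g) (lone G) := by
  rintro ⟨F, -, hF⟩
  exact no_ell_one_family_of_johnson_class_vanishes_general m hm ⟨F, hF⟩
end
end

section
/- For every element g of the free group F₂ on generators a, b, there exist a unique s ∈ S = {a, b, a⁻¹, b⁻¹} and an N such that for all n ≥ N the reduced word representing g·aⁿ is nonempty and has first letter s. (Hence the direction function D : F₂ → S, sending g to this letter s, is well defined; D(g) is the first edge from the identity on the geodesic in the Cayley graph of F₂ towards the boundary point g·p, where p is the endpoint of the ray (aⁿ).) -/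
noncomputable section

/-- The free group on two generators. -/
abbrev F2 : Type := FreeGroup (Fin 2)

/-- The first generator `a` of `F₂`. -/
def genA : F2 := FreeGroup.of 0

/-- The second generator `b` of `F₂`. -/
def genB : F2 := FreeGroup.of 1

/-- The group element of `F₂` corresponding to a letter: `(i, true) ↦ xᵢ`, `(i, false) ↦ xᵢ⁻¹`.
As `s` ranges over `Fin 2 × Bool`, `el s` ranges over `S = {a, b, a⁻¹, b⁻¹}`. -/
def el (s : Fin 2 × Bool) : F2 := cond s.2 (FreeGroup.of s.1) (FreeGroup.of s.1)⁻¹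

/-- The inverse letter: `invL s` is the letter representing `(el s)⁻¹`. -/
def invL (s : Fin 2 × Bool) : Fin 2 × Bool := (s.1, !s.2)

/-!
If two elements `x` and `y` have reduced words with different first letters, then the geodesic from
`x` to `y` in the Cayley tree passes through `1`, so `norm (x⁻¹ * y) = norm x + norm y`. For `h ≠ 1`
the elements `g * h ^ n` move away from `1`, since the cyclic reduction of `h` occurs `n` times in
the reduced word of `h ^ n`, while consecutive ones stay at distance `norm h`. Far enough from `1`
such a step cannot pass through `1`, so the first letter no longer changes.
-/

section FirstLetter

variable {α : Type*} [DecidableEq α]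

open FreeGroup

theorem norm_mul_of_isReduced_append {x y : FreeGroup α}
    (hxy : IsReduced (x.toWord ++ y.toWord)) : (x * y).norm = x.norm + y.norm := by
  rw [FreeGroup.norm, toWord_mul, hxy.reduce_eq, List.length_append, FreeGroup.norm,
    FreeGroup.norm]

theorem isReduced_toWord_inv_append_toWord {x y : FreeGroup α}
    (hxy : x.toWord.head? ≠ y.toWord.head?) : IsReduced (x⁻¹.toWord ++ y.toWord) := by
  refine List.isChain_append.mpr ⟨isReduced_toWord, isReduced_toWord, fun s hs t ht hst => ?_⟩
  obtain ⟨r, hr, rfl⟩ : ∃ r, x.toWord.head? = some r ∧ (r.1, !r.2) = s := by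
    simpa [toWord_inv, invRev] using hs
  have hrt : r ≠ t := fun h => hxy (by rw [hr, h, ht])
  exact Bool.not_eq.mpr fun h => hrt (Prod.ext hst h)

theorem head?_toWord_eq_of_norm_inv_mul_lt {x y : FreeGroup α}
    (hxy : (x⁻¹ * y).norm < x.norm + y.norm) : x.toWord.head? = y.toWord.head? := by
  contrapose! hxy
  rw [norm_mul_of_isReduced_append (isReduced_toWord_inv_append_toWord hxy), norm_inv_eq]

theorem head?_toWord_eq_of_forall_norm_inv_mul_lt {u : ℕ → FreeGroup α} {N : ℕ}
    (hu : ∀ n ≥ N, ((u n)⁻¹ * u (n + 1)).norm < (u n).norm + (u (n + 1)).norm) :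
    ∀ n ≥ N, (u n).toWord.head? = (u N).toWord.head? := by
  intro n hn
  induction n, hn using Nat.le_induction with
  | base => rfl
  | succ n hn ih => rw [← head?_toWord_eq_of_norm_inv_mul_lt (hu n hn), ih]

theorem reduceCyclically_toWord_ne_nil {h : FreeGroup α} (hh : h ≠ 1) :
    reduceCyclically h.toWord ≠ [] := by
  intro hnil
  have hconj := reduceCyclically.conj_conjugator_reduceCyclically h.toWord
  rw [hnil, List.append_nil] at hconj
  apply hh
  rw [← mk_toWord (x := h), ← hconj, ← mul_mk, ← inv_mk, mul_inv_cancel]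

theorem le_norm_pow {h : FreeGroup α} (hh : h ≠ 1) (n : ℕ) : n ≤ (h ^ n).norm := by
  obtain rfl | hn := eq_or_ne n 0
  · exact Nat.zero_le _
  have hlen : 1 ≤ (reduceCyclically h.toWord).length :=
    List.length_pos_iff.mpr (reduceCyclically_toWord_ne_nil hh)
  calc
    n ≤ n * (reduceCyclically h.toWord).length := Nat.le_mul_of_pos_right n hlen
    _ = (List.replicate n (reduceCyclically h.toWord)).flatten.length := by simp
    _ ≤ (h ^ n).norm := by
      rw [FreeGroup.norm, toWord_pow,
        reduceCyclically.reduce_flatten_replicate isReduced_toWord, if_neg hn]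
      simp only [List.length_append]
      lia

theorem norm_le_norm_add_norm_mul (x y : FreeGroup α) : y.norm ≤ x.norm + (x * y).norm := by
  simpa using norm_mul_le x⁻¹ (x * y)

theorem direction_function_well_defined_general (g : FreeGroup α) {h : FreeGroup α} (hh : h ≠ 1) :
    ∃! s : α × Bool, ∃ N : ℕ, ∀ n ≥ N, (g * h ^ n).toWord.head? = some s := by
  have hfar (n : ℕ) : n ≤ g.norm + (g * h ^ n).norm :=
    (le_norm_pow hh n).trans (norm_le_norm_add_norm_mul g (h ^ n))
  have hstep (n : ℕ) : (g * h ^ n)⁻¹ * (g * h ^ (n + 1)) = h := by group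
  let N := g.norm + h.norm + 1
  have hconst : ∀ n ≥ N, (g * h ^ n).toWord.head? = (g * h ^ N).toWord.head? := by
    refine head?_toWord_eq_of_forall_norm_inv_mul_lt (u := fun n => g * h ^ n) fun n hn => ?_
    rw [hstep]
    have := hfar n
    lia
  have hne : (g * h ^ N).toWord ≠ [] := by
    have := hfar N
    exact List.length_pos_iff.mp (show 0 < (g * h ^ N).norm by lia)
  refine ⟨(g * h ^ N).toWord.head hne,
    ⟨N, fun n hn => (hconst n hn).trans (List.head?_eq_some_head hne)⟩, ?_⟩
  rintro t ⟨M, ht⟩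
  have hmax := (hconst (max N M) (le_max_left N M)).symm.trans (ht _ (le_max_right N M))
  exact Option.some.inj (hmax.symm.trans (List.head?_eq_some_head hne))

end FirstLetter

/-- For every `g ∈ F₂` there is a unique letter `s ∈ S = {a, b, a⁻¹, b⁻¹}` (encoded as
`s : Fin 2 × Bool`) such that for all sufficiently large `n` the reduced word of `g·aⁿ`
is nonempty with first letter `s`.  Hence the direction function `D` is well defined. -/
theorem direction_function_well_defined (g : F2) :
    ∃! s : Fin 2 × Bool, ∃ N : ℕ, ∀ n ≥ N,
      (FreeGroup.toWord (g * genA ^ n)).head? = some s :=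
  direction_function_well_defined_general g (FreeGroup.of_ne_one 0)
end
end

section
/- Let D : F₂ → S be the direction function on the free group F₂ on generators a, b. Then for every g ∈ F₂, Σ_{s ∈ S} (𝟙[D(s⁻¹g) = s⁻¹] − 𝟙[D(g) = s]) = 2, where 𝟙[P] equals 1 if P holds and 0 otherwise; equivalently, exactly one s ∈ S satisfies D(g) = s and exactly three s ∈ S satisfy D(s⁻¹g) = s⁻¹. (This is the computation ∂c(e) = 3 − 1 = 2 for the explicit ℓ¹-cycle c built from geodesics towards the boundary point p.) -/
noncomputable section

/-!
The letter `s⁻¹` begins the reduced word of `s⁻¹h` precisely when nothing cancels, that is, when `s`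
does not begin the reduced word of `h`. Applied to `h = g * aⁿ` with `n` large, this says that
`D (s⁻¹g) = s⁻¹` holds exactly for the letters `s ≠ D g`: all but one of the four.
-/

section General

open FreeGroup Filter

variable {α : Type*} [DecidableEq α]

theorem eq_iff_mem_startsWith {s t : α × Bool} {g : FreeGroup α} (hg : g ∈ startsWith t) :
    t = s ↔ g ∈ startsWith s :=
  ⟨fun h => h ▸ hg, fun h => Option.some.inj (hg.symm.trans h)⟩

theorem mem_startsWith_iff_exists_toWord_eq_cons {s : α × Bool} {g : FreeGroup α} :
    g ∈ startsWith s ↔ ∃ t, g.toWord = s :: t := by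
  rw [startsWith, Set.mem_ofPred_eq, ← List.head?_eq_getElem?, List.head?_eq_some_iff]

theorem toWord_mk_mul_of_toWord_eq_cons {s : α × Bool} {g : FreeGroup α} {t : List (α × Bool)}
    (hg : g.toWord = (s.1, !s.2) :: t) : (mk [s] * g).toWord = t := by
  have ht : IsReduced t := (hg ▸ isReduced_toWord).infix (List.suffix_cons _ t).isInfix
  have hmul : mk [s] * g = mk t := by
    rw [← mk_toWord (x := g), hg, mul_mk]
    exact Quot.sound Red.Step.cons_not
  rw [hmul, toWord_mk, ht.reduce_eq]

theorem mk_mul_mem_startsWith_iff {s : α × Bool} {g : FreeGroup α} :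
    mk [s] * g ∈ startsWith s ↔ g ∉ startsWith (s.1, !s.2) := by
  refine ⟨fun hsg hg => ?_, startsWith_mk_mul g⟩
  obtain ⟨t, ht⟩ := mem_startsWith_iff_exists_toWord_eq_cons.mp hg
  obtain ⟨u, hu⟩ := mem_startsWith_iff_exists_toWord_eq_cons.mp hsg
  rw [toWord_mk_mul_of_toWord_eq_cons ht] at hu
  have hred : IsReduced ((s.1, !s.2) :: s :: u) := hu ▸ ht ▸ isReduced_toWord
  exact Bool.not_ne_self s.2 ((isReduced_cons_cons.mp hred).1 rfl)

/-- `D` is the direction function of the filter `l`: the reduced word of `g * x` begins with the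
letter `D g` eventually as `x` runs along `l`. The filter stands for a boundary point of the free
group; the point `lim aⁿ` is encoded as the image of `atTop` under `n ↦ aⁿ`. -/
def IsDirection (l : Filter (FreeGroup α)) (D : FreeGroup α → α × Bool) : Prop :=
  ∀ g, ∀ᶠ x in l, g * x ∈ startsWith (D g)

theorem isDirection_map_pow_atTop_iff {a : FreeGroup α} {D : FreeGroup α → α × Bool} :
    IsDirection (atTop.map fun n : ℕ => a ^ n) D ↔
      ∀ g, ∃ N : ℕ, ∀ n ≥ N, (toWord (g * a ^ n)).head? = some (D g) := by
  simp only [IsDirection, startsWith, eventually_map, eventually_atTop, Set.mem_ofPred_eq,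
    List.head?_eq_getElem?]

theorem IsDirection.apply_inv_mul_eq_iff {l : Filter (FreeGroup α)} [l.NeBot]
    {D : FreeGroup α → α × Bool} (hD : IsDirection l D) (g : FreeGroup α) (s : α × Bool) :
    D ((mk [s])⁻¹ * g) = (s.1, !s.2) ↔ D g ≠ s := by
  obtain ⟨x, hg, hsg⟩ := ((hD g).and (hD ((mk [s])⁻¹ * g))).exists
  have hinv : (mk [s])⁻¹ = mk [(s.1, !s.2)] := rfl
  rw [eq_iff_mem_startsWith hsg, mul_assoc, hinv, mk_mul_mem_startsWith_iff, Bool.not_not,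
    Ne, eq_iff_mem_startsWith hg]

theorem direction_function_boundary_computation_general [Fintype α] (R : Type*) [Ring R]
    {l : Filter (FreeGroup α)} [l.NeBot] {D : FreeGroup α → α × Bool} (hD : IsDirection l D)
    (g : FreeGroup α) :
    (∑ s : α × Bool,
      ((if D ((mk [s])⁻¹ * g) = (s.1, !s.2) then (1 : R) else 0) -
        (if D g = s then (1 : R) else 0))) = 2 * Fintype.card α - 2 ∧
    (Finset.univ.filter fun s : α × Bool => D g = s).card = 1 ∧
    (Finset.univ.filter fun s : α × Bool => D ((mk [s])⁻¹ * g) = (s.1, !s.2)).card =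
      2 * Fintype.card α - 1 := by
  simp only [hD.apply_inv_mul_eq_iff]
  have card_eq : (Finset.univ.filter fun s : α × Bool => D g = s).card = 1 := by
    simp [Finset.filter_eq]
  have card_ne : (Finset.univ.filter fun s : α × Bool => D g ≠ s).card =
      2 * Fintype.card α - 1 := by
    simp [Finset.filter_ne, mul_comm]
  refine ⟨?_, card_eq, card_ne⟩
  have card_pos : 0 < Fintype.card α := Fintype.card_pos_iff.mpr ⟨(D g).1⟩
  rw [Finset.sum_sub_distrib, Finset.sum_boole, Finset.sum_boole, card_eq, card_ne,
    Nat.cast_pred (by positivity)]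
  push_cast
  rw [sub_sub, one_add_one_eq_two]

end General

theorem el_eq_mk (s : Fin 2 × Bool) : el s = FreeGroup.mk [s] := by
  obtain ⟨i, _ | _⟩ := s <;> rfl

/-- For the direction function `D` on `F₂`:
`Σ_{s ∈ S} (𝟙[D(s⁻¹g) = s⁻¹] − 𝟙[D(g) = s]) = 2`; equivalently, exactly one `s ∈ S`
satisfies `D(g) = s` and exactly three satisfy `D(s⁻¹g) = s⁻¹`.
(This is the computation `∂c(e) = 3 − 1 = 2`.) -/
theorem direction_function_boundary_computation (D : F2 → Fin 2 × Bool)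
    (hD : ∀ g : F2, ∃ N : ℕ, ∀ n ≥ N,
      (FreeGroup.toWord (g * genA ^ n)).head? = some (D g)) :
    ∀ g : F2,
      (∑ s : Fin 2 × Bool,
        ((if D ((el s)⁻¹ * g) = invL s then (1 : ℝ) else 0) -
          (if D g = s then (1 : ℝ) else 0))) = 2 ∧
      (Finset.univ.filter fun s : Fin 2 × Bool => D g = s).card = 1 ∧
      (Finset.univ.filter fun s : Fin 2 × Bool => D ((el s)⁻¹ * g) = invL s).card = 3 := by
  simp only [el_eq_mk]
  exact fun g => (direction_function_boundary_computation_general ℝ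
    (isDirection_map_pow_atTop_iff.mpr hD) g).imp_left fun hsum => hsum.trans (by norm_num)
end
end

section
/- For the free group F₂ on two generators there is no continuous linear functional m on ℓ∞(F₂)/ℝ satisfying m([h ↦ f(gh)] − [f]) = f(g) − f(e) for all g ∈ F₂ and f ∈ ℓ∞(F₂); that is, the Johnson class is nonzero in H¹(F₂, (ℓ∞(F₂)/ℝ)*). -/
noncomputable section
open scoped ENNReal

/-!
If `m` satisfies the identity, then `M f = f 1 - m [f]` is a translation-invariant additive
functional on bounded functions with `M 1 = 1`. When `S` is disjoint from `xⁿ S` for all `n ≥ 1`,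
the union `P` of the `xⁿ S`, `n ≥ 0`, splits as `P = S ⊔ x P`, so invariance gives `M 1_S = 0`.
In a free group let `S` be the set of reduced words beginning with `b` or `b⁻¹`. Powers of `a` move
`S` off itself and powers of `b` move `Sᶜ` off itself, so `M 1 = M 1_S + M 1_{Sᶜ} = 0`.
-/

open scoped Pointwise

section Wandering

variable {G : Type*} [Group G] {x : G} {S T : Set G}

/-- A set is wandering for `x` if it is disjoint from all its translates by positive powers of `x`.
Such sets are null for every translation-invariant functional. -/
def IsWandering (x : G) (S : Set G) : Prop :=
  ∀ n : ℕ, Disjoint S (x ^ (n + 1) • S)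

theorem IsWandering.mono (hT : IsWandering x T) (hST : S ⊆ T) : IsWandering x S :=
  fun n => (hT n).mono hST (Set.smul_set_mono hST)

theorem smul_iUnion_pow_smul (x : G) (S : Set G) :
    x • ⋃ n : ℕ, x ^ n • S = ⋃ n : ℕ, x ^ (n + 1) • S := by
  simp only [Set.smul_set_iUnion, smul_smul, pow_succ']

theorem union_smul_iUnion_pow_smul (x : G) (S : Set G) :
    S ∪ x • ⋃ n : ℕ, x ^ n • S = ⋃ n : ℕ, x ^ n • S := by
  rw [smul_iUnion_pow_smul]
  simpa only [pow_zero, one_smul] using Set.union_iUnion_nat_succ fun n : ℕ => x ^ n • S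

theorem IsWandering.disjoint_smul_iUnion_pow_smul (hS : IsWandering x S) :
    Disjoint S (x • ⋃ n : ℕ, x ^ n • S) := by
  rw [smul_iUnion_pow_smul]
  exact Set.disjoint_iUnion_right.2 hS

end Wandering

section Indicator

variable {G : Type*}

/-- The indicator function of `S` as an element of `ℓ∞(G)`. -/
def linfIndicator (S : Set G) : Linf G :=
  ⟨S.indicator 1, memℓp_infty ⟨1, by
    rintro _ ⟨h, rfl⟩
    exact (norm_indicator_le_norm_self 1 h).trans_eq norm_one⟩⟩

theorem linfIndicator_univ : linfIndicator (Set.univ : Set G) = lone G :=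
  Subtype.ext (Set.indicator_univ 1)

theorem linfIndicator_union {S T : Set G} (hST : Disjoint S T) :
    linfIndicator (S ∪ T) = linfIndicator S + linfIndicator T :=
  Subtype.ext (Set.indicator_union_of_disjoint hST 1)

theorem linfIndicator_add_compl (S : Set G) :
    linfIndicator S + linfIndicator Sᶜ = lone G := by
  rw [← linfIndicator_union disjoint_compl_right, Set.union_compl_self, linfIndicator_univ]

theorem rt_inv_linfIndicator [Group G] (g : G) (S : Set G) :
    rt g⁻¹ (linfIndicator S) = linfIndicator (g • S) := by
  rw [← Set.preimage_smul_inv]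
  rfl

end Indicator

section InvariantFunctional

variable {G A : Type*} [Group G] [AddCommGroup A] {M : Linf G →+ A}

/-- Invariance of an additive functional on `ℓ∞(G)` under the translations
`f ↦ (h ↦ f (g * h))`. -/
def IsTranslationInvariant (M : Linf G →+ A) : Prop :=
  ∀ (g : G) (f : Linf G), M (rt g f) = M f

theorem IsTranslationInvariant.map_linfIndicator_smul (hM : IsTranslationInvariant M)
    (g : G) (S : Set G) : M (linfIndicator (g • S)) = M (linfIndicator S) := by
  rw [← rt_inv_linfIndicator, hM]

theorem IsTranslationInvariant.map_linfIndicator_eq_zero (hM : IsTranslationInvariant M)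
    {x : G} {S : Set G} (hS : IsWandering x S) : M (linfIndicator S) = 0 := by
  set P : Set G := ⋃ n : ℕ, x ^ n • S
  have hP : M (linfIndicator P) = M (linfIndicator S) + M (linfIndicator P) :=
    calc
      M (linfIndicator P) = M (linfIndicator (S ∪ x • P)) := by
        rw [union_smul_iUnion_pow_smul]
      _ = M (linfIndicator S) + M (linfIndicator (x • P)) := by
        rw [linfIndicator_union hS.disjoint_smul_iUnion_pow_smul, map_add]
      _ = M (linfIndicator S) + M (linfIndicator P) := by
        rw [hM.map_linfIndicator_smul]
  exact right_eq_add.1 hP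

theorem IsTranslationInvariant.map_lone_eq_zero (hM : IsTranslationInvariant M)
    {x y : G} {S : Set G} (hS : IsWandering x S) (hSc : IsWandering y Sᶜ) :
    M (lone G) = 0 := by
  rw [← linfIndicator_add_compl S, map_add, hM.map_linfIndicator_eq_zero hS,
    hM.map_linfIndicator_eq_zero hSc, add_zero]

end InvariantFunctional

section JohnsonClass

variable {G : Type*} [Group G]

/-- The functional `f ↦ f 1 - m [f]` on `ℓ∞(G)`. It is translation-invariant exactly when `m`
trivializes the Johnson class. -/
def evalOneSub (m : (Linf G ⧸ Consts G) →+ ℝ) : Linf G →+ ℝ :=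
  (lp.evalₗ (𝕜 := ℝ) (fun _ : G => ℝ) ∞ 1).toAddMonoidHom - m.comp (Consts G).mkQ.toAddMonoidHom

theorem evalOneSub_apply (m : (Linf G ⧸ Consts G) →+ ℝ) (f : Linf G) :
    evalOneSub m f = f 1 - m (Submodule.Quotient.mk f) :=
  rfl

theorem evalOneSub_lone (m : (Linf G ⧸ Consts G) →+ ℝ) : evalOneSub m (lone G) = 1 := by
  have hlone : (Submodule.Quotient.mk (lone G) : Linf G ⧸ Consts G) = 0 :=
    (Submodule.Quotient.mk_eq_zero _).2 (Submodule.mem_span_singleton_self _)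
  rw [evalOneSub_apply, hlone, map_zero, sub_zero]
  rfl

theorem isTranslationInvariant_evalOneSub {m : (Linf G ⧸ Consts G) →+ ℝ}
    (hm : ∀ (g : G) (f : Linf G),
      m (Submodule.Quotient.mk (rt g f) - Submodule.Quotient.mk f) = f g - f 1) :
    IsTranslationInvariant (evalOneSub m) := by
  intro g f
  have hrt : rt g f 1 = f g := congrArg f (mul_one g)
  have hgf := hm g f
  rw [map_sub] at hgf
  rw [evalOneSub_apply, evalOneSub_apply, hrt]
  linarith

theorem johnson_class_nonzero_of_isWandering {x y : G} {S : Set G}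
    (hS : IsWandering x S) (hSc : IsWandering y Sᶜ) :
    ¬ ∃ m : (Linf G ⧸ Consts G) →+ ℝ,
        ∀ (g : G) (f : Linf G),
          m (Submodule.Quotient.mk (rt g f) - Submodule.Quotient.mk f) = f g - f 1 := by
  rintro ⟨m, hm⟩
  have hzero := (isTranslationInvariant_evalOneSub hm).map_lone_eq_zero hS hSc
  exact one_ne_zero ((evalOneSub_lone m).symm.trans hzero)

end JohnsonClass

section FreeGroup

open FreeGroup (of startsWith)

variable {α : Type*} [DecidableEq α]

/-- The set of reduced words whose first letter is `i` or its inverse. -/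
def startsWithGenerator (i : α) : Set (FreeGroup α) :=
  startsWith (i, true) ∪ startsWith (i, false)

theorem disjoint_startsWithGenerator {i j : α} (hij : i ≠ j) :
    Disjoint (startsWithGenerator i) (startsWithGenerator j) := by
  simp [startsWithGenerator, hij]

theorem of_pow_succ_mul_mem_startsWith {i : α} {g : FreeGroup α}
    (hg : g ∉ startsWith (i, false)) (n : ℕ) : of i ^ (n + 1) * g ∈ startsWith (i, true) := by
  induction n with
  | zero =>
    rw [zero_add, pow_one]
    exact FreeGroup.startsWith_mk_mul g hg
  | succ n ih =>
    have hdisj : Disjoint (startsWith (i, true)) (startsWith (i, false)) := by simp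
    rw [pow_succ', mul_assoc]
    exact FreeGroup.startsWith_mk_mul _ (hdisj.notMem_of_mem_left ih)

theorem isWandering_compl_startsWithGenerator (i : α) :
    IsWandering (of i) (startsWithGenerator i)ᶜ := by
  refine fun n => Set.disjoint_compl_left_iff_subset.2 ?_
  rintro _ ⟨g, hg, rfl⟩
  exact Or.inl (of_pow_succ_mul_mem_startsWith (fun h => hg (Or.inr h)) n)

theorem isWandering_startsWithGenerator {i j : α} (hij : i ≠ j) :
    IsWandering (of i) (startsWithGenerator j) :=
  (isWandering_compl_startsWithGenerator i).mono
    (disjoint_startsWithGenerator hij).subset_compl_left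

end FreeGroup

theorem johnson_class_nonzero_for_freeGroup_two_general {α : Type*} [Nontrivial α] :
    ¬ ∃ m : (Linf (FreeGroup α) ⧸ Consts (FreeGroup α)) →+ ℝ,
        ∀ (g : FreeGroup α) (f : Linf (FreeGroup α)),
          m (Submodule.Quotient.mk (rt g f) - Submodule.Quotient.mk f) = f g - f 1 := by
  classical
  obtain ⟨i, j, hij⟩ := exists_pair_ne α
  exact johnson_class_nonzero_of_isWandering (isWandering_startsWithGenerator hij)
    (isWandering_compl_startsWithGenerator j)

/-- For the free group `F₂` there is no continuous linear functional `m` on `ℓ∞(F₂)/ℝ`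
with `m([h ↦ f(gh)] − [f]) = f(g) − f(e)` for all `g, f`; i.e. the Johnson class is
nonzero in `H¹(F₂, (ℓ∞(F₂)/ℝ)*)`. -/
theorem johnson_class_nonzero_for_freeGroup_two :
    ¬ ∃ m : (Linf F2 ⧸ Consts F2) →L[ℝ] ℝ,
        ∀ (g : F2) (f : Linf F2),
          m (Submodule.Quotient.mk (rt g f) - Submodule.Quotient.mk f) = f g - f 1 :=
  fun ⟨m, hm⟩ => johnson_class_nonzero_for_freeGroup_two_general ⟨m.toLinearMap.toAddMonoidHom, hm⟩
end
end

section
/- Let G be a countable discrete group. If there exists a continuous linear functional m on ℓ∞(G)/ℝ satisfying m([h ↦ f(gh)] − [f]) = f(g) − f(e) for all g ∈ G and f ∈ ℓ∞(G), then the continuous linear functional μ on ℓ∞(G) defined by μ(f) = f(e) − m([f]) is invariant under the left-translation action of G and satisfies μ(1) = 1. (Vanishing of the Johnson class produces an invariant functional normalising the constants, the key step (3) ⟹ (2) of the characterisation.) -/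
noncomputable section
open scoped ENNReal

/-- The functional `μ(f) = f(e) - m([f])` on `ℓ∞(G)` attached to a functional `m` on `ℓ∞(G)/ℝ`.
It is `G`-invariant exactly when `m` trivializes the Johnson cocycle. -/
def johnsonFunctional {G : Type*} [One G] (m : (Linf G ⧸ Consts G) →L[ℝ] ℝ) : Linf G →L[ℝ] ℝ :=
  lp.evalCLM ℝ (fun _ : G => ℝ) ∞ 1 - m ∘L (Consts G).mkQL

section Pointed

variable {G : Type*} [One G] (m : (Linf G ⧸ Consts G) →L[ℝ] ℝ)

theorem johnsonFunctional_apply (f : Linf G) :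
    johnsonFunctional m f = f 1 - m (Submodule.Quotient.mk f) :=
  rfl

theorem johnsonFunctional_lone : johnsonFunctional m (lone G) = 1 := by
  have mk_lone : (Submodule.Quotient.mk (lone G) : Linf G ⧸ Consts G) = 0 :=
    (Submodule.Quotient.mk_eq_zero _).2 (Submodule.mem_span_singleton_self _)
  have lone_one : lone G 1 = 1 := rfl
  rw [johnsonFunctional_apply, mk_lone, map_zero, sub_zero, lone_one]

end Pointed

section Translation

variable {G : Type*} [Group G]

theorem rt_apply_one (g : G) (f : Linf G) : rt g f 1 = f g :=
  congrArg f (mul_one g)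

theorem johnsonFunctional_rt_eq_iff (m : (Linf G ⧸ Consts G) →L[ℝ] ℝ) (g : G) (f : Linf G) :
    johnsonFunctional m (rt g f) = johnsonFunctional m f ↔
      m (Submodule.Quotient.mk (rt g f) - Submodule.Quotient.mk f) = f g - f 1 := by
  rw [johnsonFunctional_apply, johnsonFunctional_apply, rt_apply_one, map_sub,
    sub_eq_sub_iff_sub_eq_sub, eq_comm]

end Translation

theorem invariant_functional_of_johnson_class_vanishes_general
    (G : Type*) [Group G]
    (m : (Linf G ⧸ Consts G) →L[ℝ] ℝ)
    (hm : ∀ (g : G) (f : Linf G),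
      m (Submodule.Quotient.mk (rt g f) - Submodule.Quotient.mk f) = f g - f 1) :
    ∃ μ : Linf G →L[ℝ] ℝ,
      (∀ f : Linf G, μ f = f 1 - m (Submodule.Quotient.mk f)) ∧
      (∀ (g : G) (f : Linf G), μ (ltrans g f) = μ f) ∧
      μ (lone G) = 1 := by
  refine ⟨johnsonFunctional m, johnsonFunctional_apply m, fun g f => ?_, johnsonFunctional_lone m⟩
  rw [ltrans_eq_rt_inv]
  exact (johnsonFunctional_rt_eq_iff m g⁻¹ f).2 (hm g⁻¹ f)

/-- If the Johnson class vanishes, i.e. some continuous linear functional `m` on `ℓ∞(G)/ℝ`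
satisfies `m([h ↦ f(gh)] − [f]) = f(g) − f(e)`, then the continuous linear functional
`μ(f) = f(e) − m([f])` on `ℓ∞(G)` is `G`-invariant and satisfies `μ(1) = 1`. -/
theorem invariant_functional_of_johnson_class_vanishes
    (G : Type*) [Group G] [Countable G]
    (m : (Linf G ⧸ Consts G) →L[ℝ] ℝ)
    (hm : ∀ (g : G) (f : Linf G),
      m (Submodule.Quotient.mk (rt g f) - Submodule.Quotient.mk f) = f g - f 1) :
    ∃ μ : Linf G →L[ℝ] ℝ,
      (∀ f : Linf G, μ f = f 1 - m (Submodule.Quotient.mk f)) ∧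
      (∀ (g : G) (f : Linf G), μ (ltrans g f) = μ f) ∧
      μ (lone G) = 1 :=
  invariant_functional_of_johnson_class_vanishes_general G m hm
end
end
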